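/- Let p > 2 and w(s) = (cosh s)^{-2/(p-2)}. Then ∫_ℝ w(s)^{2(2p-3)} ds = ( 16 p (p-1)(3p-4) / ((3p-2)(5p-6)(7p-10)) ) ∫_ℝ w(s)^p ds. -/

import Mathlib

open MeasureTheory

lemma aux_bound (a : ℝ) (ha : 0 < a) (s t : ℝ) (h : Real.exp t * (1/2) ≤ Real.cosh s) :
    Real.cosh s ^ (-a) ≤ Real.exp (-a * t) * (1/2 : ℝ) ^ (-a) := by
  have h1 := Real.rpow_le_rpow_of_nonpos (by positivity) h (by linarith : -a ≤ 0)
  rwa [Real.mul_rpow (Real.exp_pos t).le (by norm_num), ← Real.exp_mul, mul_comm t] at h1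

lemma aux_pos (s : ℝ) : Real.exp s * (1/2) ≤ Real.cosh s := by
  rw [Real.cosh_eq]; linarith [Real.exp_pos (-s)]

lemma aux_neg (s : ℝ) : Real.exp (-s) * (1/2) ≤ Real.cosh s := by
  rw [Real.cosh_eq]; linarith [Real.exp_pos s]

lemma aux_cont (a : ℝ) : Continuous fun s : ℝ => Real.cosh s ^ (-a) :=
  Real.continuous_cosh.rpow_const fun s => Or.inl (Real.cosh_pos s).ne'

lemma aux_int (a : ℝ) (ha : 0 < a) : Integrable fun s : ℝ => Real.cosh s ^ (-a) := by
  have hn : ∀ s, ‖Real.cosh s ^ (-a)‖ = Real.cosh s ^ (-a) := fun s =>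
    Real.norm_of_nonneg (Real.rpow_nonneg (Real.cosh_pos s).le _)
  rw [← integrableOn_univ, ← Set.Iic_union_Ioi (a := (0:ℝ))]
  refine IntegrableOn.union ?_ ?_
  · refine Integrable.mono' ((integrableOn_exp_mul_Iic ha 0).mul_const ((1/2 : ℝ) ^ (-a)))
      (aux_cont a).aestronglyMeasurable (Filter.Eventually.of_forall fun s => ?_)
    have := aux_bound a ha s (-s) (aux_neg s)
    rw [hn]; simpa using this
  · refine Integrable.mono' ((integrableOn_exp_mul_Ioi (by linarith : -a < 0) 0).mul_const
      ((1/2 : ℝ) ^ (-a)))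
      (aux_cont a).aestronglyMeasurable (Filter.Eventually.of_forall fun s => ?_)
    have := aux_bound a ha s s (aux_pos s)
    rw [hn]; exact this

lemma aux_lim (a : ℝ) (ha : 0 < a) (l : Filter ℝ) (hl : Filter.Tendsto Real.cosh l Filter.atTop) :
    Filter.Tendsto (fun s => Real.sinh s * Real.cosh s ^ (-a - 1)) l (nhds 0) := by
  refine squeeze_zero_norm (fun s => ?_) ((tendsto_rpow_neg_atTop ha).comp hl)
  have hc := Real.cosh_pos s
  have h1 : |Real.sinh s| ≤ Real.cosh s := by
    rw [← abs_of_pos hc]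
    apply sq_le_sq.mp
    linarith [Real.cosh_sq s]
  have h2 : 0 < Real.cosh s ^ (-a - 1) := Real.rpow_pos_of_pos hc _
  rw [Real.norm_eq_abs, abs_mul, abs_of_pos h2]
  calc _ ≤ Real.cosh s * Real.cosh s ^ (-a - 1) := by gcongr
    _ = Real.cosh s ^ (-a) := by
      rw [Real.rpow_sub_one hc.ne']; field_simp

lemma aux_rec (a : ℝ) (ha : 0 < a) :
    ∫ s : ℝ, Real.cosh s ^ (-(a + 2)) = a / (a + 1) * ∫ s : ℝ, Real.cosh s ^ (-a) := by
  have hd : ∀ s, HasDerivAt (fun s => Real.sinh s * Real.cosh s ^ (-a - 1))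
      ((a + 1) * Real.cosh s ^ (-(a + 2)) - a * Real.cosh s ^ (-a)) s := by
    intro s
    have hc := Real.cosh_pos s
    have := (Real.hasDerivAt_sinh s).mul
      ((Real.hasDerivAt_cosh s).rpow_const (p := -a - 1) (Or.inl hc.ne'))
    refine this.congr_deriv ?_
    have e1 : Real.cosh s ^ (-a) = Real.cosh s ^ (-(a+2)) * Real.cosh s ^ 2 := by
      rw [← Real.rpow_natCast, ← Real.rpow_add hc]; congr 1; push_cast; ring
    have e2 : Real.cosh s ^ (-a - 1) = Real.cosh s ^ (-(a+2)) * Real.cosh s := by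
      rw [← Real.rpow_add_one hc.ne']; congr 1; ring
    have e3 : Real.cosh s ^ (-a - 1 - 1) = Real.cosh s ^ (-(a+2)) := by congr 1; ring
    rw [e1, e3, e2]
    linear_combination (a + 1) * Real.cosh s ^ (-(a+2)) * Real.cosh_sq s
  have i1 := (aux_int (a + 2) (by linarith)).const_mul (a + 1)
  have i2 := (aux_int a ha).const_mul a
  have hex : Filter.Tendsto (fun s => Real.exp s * (1/2)) Filter.atTop Filter.atTop :=
    Real.tendsto_exp_atTop.atTop_mul_const (by norm_num)
  have key := integral_of_hasDerivAt_of_tendsto hd (i1.sub i2)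
    (aux_lim a ha _ (Filter.tendsto_atTop_mono aux_neg
      (hex.comp Filter.tendsto_neg_atBot_atTop)))
    (aux_lim a ha _ (Filter.tendsto_atTop_mono aux_pos hex))
  rw [integral_sub i1 i2, integral_const_mul, integral_const_mul] at key
  field_simp
  linarith

/-- For `p > 2` and `w(s) = (cosh s)^{-2/(p-2)}`, one has
`∫ w^{2(2p-3)} = (16p(p-1)(3p-4)/((3p-2)(5p-6)(7p-10))) ∫ w^p`. -/
theorem statement15 (p : ℝ) (hp : 2 < p)
    (w : ℝ → ℝ) (hw : ∀ s, w s = Real.cosh s ^ (-(2 / (p - 2)))) :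
    (∫ s : ℝ, w s ^ (2 * (2 * p - 3))) =
      16 * p * (p - 1) * (3 * p - 4) / ((3 * p - 2) * (5 * p - 6) * (7 * p - 10)) *
        ∫ s : ℝ, w s ^ p := by
  have hq : 0 < p - 2 := by linarith
  obtain ⟨a, rfl⟩ : ∃ a, a = 2 * p / (p - 2) := ⟨_, rfl⟩
  have ha : 0 < 2 * p / (p - 2) := by positivity
  have h1 : ∀ s, w s ^ (2 * (2 * p - 3)) = Real.cosh s ^ (-(2 * p / (p - 2) + 2 + 2 + 2)) := by
    intro s
    rw [hw, ← Real.rpow_mul (Real.cosh_pos s).le]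
    congr 1; field_simp; ring
  have h2 : ∀ s, w s ^ p = Real.cosh s ^ (-(2 * p / (p - 2))) := by
    intro s
    rw [hw, ← Real.rpow_mul (Real.cosh_pos s).le]
    congr 1; field_simp
  simp_rw [h1, h2]
  rw [aux_rec _ (by linarith), aux_rec _ (by linarith), aux_rec _ ha, ← mul_assoc, ← mul_assoc]
  congr 1
  have e1 : 2 * p / (p - 2) + 1 = (3 * p - 2) / (p - 2) := by field_simp; ring
  have e2 : 2 * p / (p - 2) + 2 = 4 * (p - 1) / (p - 2) := by field_simp; ring
  have e3 : 4 * (p - 1) / (p - 2) + 1 = (5 * p - 6) / (p - 2) := by field_simp; ring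
  have e4 : 4 * (p - 1) / (p - 2) + 2 = 2 * (3 * p - 4) / (p - 2) := by field_simp; ring
  have e5 : 2 * (3 * p - 4) / (p - 2) + 1 = (7 * p - 10) / (p - 2) := by field_simp; ring
  rw [e2, e4, e5, e3, e1]
  have : 3 * p - 2 ≠ 0 := by linarith
  have : 5 * p - 6 ≠ 0 := by linarith
  have : 7 * p - 10 ≠ 0 := by linarith
  field_simp
  ring
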